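/- arXiv:2504.15428 — 3 statements merged into one kernel-verified Lean document; each statement's English description precedes it below -/
import Mathlib

section
/- Let q ≠ 3 be a rational prime, let F be a finite extension of ℚ_q whose residue field κ_F satisfies |κ_F| ≡ 1 (mod 3), and let E be a quadratic field extension of F. Then the map O_E^×/(O_E^×)³ → O_F^×/(O_F^×)³ induced by the norm N_{E/F} has trivial kernel; that is, every unit u ∈ O_E^× with N_{E/F}(u) ∈ (O_F^×)³ satisfies u ∈ (O_E^×)³. -/
/-!
Let `|κ_F| ≡ 1 (mod n)`, let `E/F` have degree `d` prime to `n`, and let `u` be a unit of `O_E` of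
residue `ū`. Write `|κ_E| - 1 = n m`. The `n`-th power residue symbol `y = ū ^ m` is an `n`-th
root of unity, and `κ_F` already contains all of them, so `u ^ m` is congruent to some `c ∈ O_F`.
All conjugates of `u ^ m` are then congruent to `c`, whence `N(u) ^ m ≡ c ^ d`. If `N(u)` is an
`n`-th power, the left side is `1` modulo the maximal ideal; thus `y ^ d = 1 = y ^ n` and `y = 1`.
So `ū` is an `n`-th power in the cyclic group `κ_Eˣ`, and Hensel's lemma lifts the root since `n`
is prime to the residue characteristic.
-/

open IsLocalRing Polynomial

section Henselian

theorem isAdicComplete_of_finite {R : Type*} [CommRing R] [IsNoetherianRing R] (I : Ideal R)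
    [IsAdicComplete I R] (M : Type*) [AddCommGroup M] [Module R M] [Module.Finite R M] :
    IsAdicComplete I M where
  toIsHausdorff := .of_le_jacobson I M (IsAdicComplete.le_jacobson_bot I)
  toIsPrecomplete := by
    rw [← AdicCompletion.of_surjective_iff]
    let e : M ≃ₗ[R] TensorProduct R (AdicCompletion I R) M := (TensorProduct.lid R M).symm ≪≫ₗ
      TensorProduct.congr (AdicCompletion.ofLinearEquiv I R) (LinearEquiv.refl R M)
    have of_eq : ⇑(AdicCompletion.of I M) = AdicCompletion.ofTensorProduct I M ∘ e := by
      funext x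
      have of_one : AdicCompletion.of I R 1 = 1 := rfl
      simp [e, AdicCompletion.ofTensorProduct_tmul, of_one]
    rw [of_eq]
    exact (AdicCompletion.ofTensorProduct_surjective_of_finite I M).comp e.surjective

theorem isLocalRing_of_discreteTopology_primeSpectrum {T : Type*} [CommRing T] [Nontrivial T]
    [DiscreteTopology (PrimeSpectrum T)]
    (trivial_of_idempotent : ∀ e : T, IsIdempotentElem e → e = 0 ∨ e = 1) : IsLocalRing T := by
  have primes_eq (p p' : PrimeSpectrum T) : p' = p := by
    obtain ⟨e, he, hp⟩ := PrimeSpectrum.isClopen_iff.mp (isClopen_discrete {p})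
    rcases trivial_of_idempotent e he with rfl | rfl
    · simp at hp
    · rw [← Set.mem_singleton_iff, hp]
      simp
  have : Subsingleton (MaximalSpectrum T) :=
    ⟨fun M M' ↦ MaximalSpectrum.toPrimeSpectrum_injective (primes_eq _ _)⟩
  exact .of_singleton_maximalSpectrum

variable {S : Type*} [CommRing S] (I : Ideal S) [HenselianRing S I]

theorem exists_isIdempotentElem_mk_eq {e : S ⧸ I} (he : IsIdempotentElem e) :
    ∃ a : S, IsIdempotentElem a ∧ Ideal.Quotient.mk I a = e := by
  obtain ⟨x, rfl⟩ := Ideal.Quotient.mk_surjective e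
  have derivative_sq : (2 * Ideal.Quotient.mk I x - 1) * (2 * Ideal.Quotient.mk I x - 1) = 1 := by
    linear_combination 4 * he.eq
  obtain ⟨a, ha, hax⟩ := HenselianRing.is_henselian (I := I) (X ^ 2 - X : S[X]) (by monicity!) x
    (by simp [← Ideal.Quotient.eq_zero_iff_mem, sq, he.eq])
    (by simpa [← one_add_one_eq_two] using IsUnit.of_mul_eq_one _ derivative_sq)
  refine ⟨a, ?_, Ideal.Quotient.eq.mpr hax⟩
  simpa [IsRoot, sub_eq_zero, sq, IsIdempotentElem] using ha

theorem isLocalRing_of_henselianRing [IsDomain S] [DiscreteTopology (PrimeSpectrum (S ⧸ I))] :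
    IsLocalRing S := by
  have : IsLocalHom (Ideal.Quotient.mk I) := isLocalHom_of_le_jacobson_bot I HenselianRing.jac
  have : Nontrivial (S ⧸ I) := by
    by_contra h
    rw [not_nontrivial_iff_subsingleton] at h
    exact not_isUnit_zero
      (isUnit_of_map_unit (Ideal.Quotient.mk I) (0 : S) (isUnit_of_subsingleton _))
  have : IsLocalRing (S ⧸ I) := isLocalRing_of_discreteTopology_primeSpectrum fun e he ↦ by
    obtain ⟨a, ha, rfl⟩ := exists_isIdempotentElem_mk_eq I he
    rcases IsIdempotentElem.iff_eq_zero_or_one.mp ha with rfl | rfl <;> simp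
  exact RingHom.domain_isLocalRing (Ideal.Quotient.mk I)

theorem henselianLocalRing_of_henselianRing [IsLocalRing S] (hI : maximalIdeal S ≤ I.radical) :
    HenselianLocalRing S where
  is_henselian f hf a₀ root_mod simple_mod := by
    let π := Ideal.Quotient.mk I
    have aeval_mk (g : S[X]) (x : S) : aeval (π x) g = π (g.eval x) :=
      aeval_algebraMap_apply_eq_algebraMap_eval x g
    have I_le : I ≤ maximalIdeal S :=
      (HenselianRing.jac (I := I)).trans (jacobson_eq_maximalIdeal ⊥ bot_ne_top).le
    have isNilpotent_iff (x : S) : IsNilpotent (π x) ↔ x ∈ maximalIdeal S := by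
      rw [← mem_nilradical, nilradical, ← Ideal.mem_comap, Ideal.comap_radical, Ideal.zero_eq_bot,
        ← RingHom.ker_eq_comap_bot, Ideal.mk_ker]
      exact ⟨fun hx ↦ (Ideal.IsPrime.radical_le_iff inferInstance).mpr I_le hx, fun hx ↦ hI hx⟩
    -- Newton iteration in `S ⧸ I`, whose maximal ideal is nil, gives a root `b` modulo `I`, which
    -- the Henselian pair `(S, I)` then lifts.
    obtain ⟨r, ⟨near, root⟩, -⟩ := existsUnique_nilpotent_sub_and_aeval_eq_zero (P := f)
      (x := π a₀) (by rwa [aeval_mk, isNilpotent_iff]) (by rw [aeval_mk]; exact simple_mod.map π)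
    obtain ⟨b, rfl⟩ := Ideal.Quotient.mk_surjective r
    rw [← map_sub, isNilpotent_iff] at near
    rw [aeval_mk] at root
    have simple : IsUnit (f.derivative.eval b) := by
      rw [← residue_ne_zero_iff_isUnit] at simple_mod ⊢
      have : residue S a₀ = residue S b := Ideal.Quotient.eq.mpr near
      rwa [← eval₂_at_apply, ← this, eval₂_at_apply]
    obtain ⟨a, ha, hab⟩ := HenselianRing.is_henselian f hf b
      (Ideal.Quotient.eq_zero_iff_mem.mp root) (simple.map π)
    refine ⟨a, ha, ?_⟩
    rw [← sub_sub_sub_cancel_right a a₀ b]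
    exact sub_mem (I_le hab) near

theorem henselianLocalRing_of_finite (R : Type*) {S : Type*} [CommRing R] [IsNoetherianRing R]
    [IsLocalRing R] [IsAdicComplete (maximalIdeal R) R] [CommRing S] [IsDomain S] [Algebra R S]
    [Module.Finite R S] : HenselianLocalRing S := by
  let I : Ideal S := (maximalIdeal R).map (algebraMap R S)
  have : IsAdicComplete I S :=
    (IsAdicComplete.map_algebraMap_iff (maximalIdeal R) S).mpr (isAdicComplete_of_finite _ S)
  have : Module.Finite (R ⧸ maximalIdeal R) (S ⧸ I) := .of_restrictScalars_finite R _ _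
  have : IsArtinianRing (R ⧸ maximalIdeal R) := inferInstanceAs (IsArtinianRing (ResidueField R))
  have : IsArtinianRing (S ⧸ I) := .of_finite (R ⧸ maximalIdeal R) (S ⧸ I)
  have : IsLocalRing S := isLocalRing_of_henselianRing I
  refine henselianLocalRing_of_henselianRing I ?_
  rw [Ideal.radical_eq_sInf]
  refine le_sInf fun P ⟨hIP, hP⟩ ↦ ?_
  have : (P.comap (algebraMap R S)).IsMaximal := by
    rw [← (maximalIdeal.isMaximal R).eq_of_le Ideal.IsPrime.ne_top'
      (Ideal.map_le_iff_le_comap.mp hIP)]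
    infer_instance
  exact (eq_maximalIdeal (Ideal.isMaximal_of_isIntegral_of_isMaximal_comap P this)).ge

end Henselian

theorem exists_pow_eq_of_pow_eq_one {G : Type*} [Group G] [Finite G] [IsCyclic G]
    {m n : ℕ} (hcard : Nat.card G = n * m) {x : G} (hx : x ^ m = 1) : ∃ y : G, y ^ n = x := by
  obtain ⟨g, hg⟩ := IsCyclic.exists_generator (α := G)
  obtain ⟨j, rfl⟩ := mem_powers_iff_mem_zpowers.mpr (hg x)
  have hm : 0 < m := Nat.pos_of_mul_pos_left (hcard ▸ Nat.card_pos)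
  have n_dvd : n * m ∣ j * m := by
    rw [← hcard, ← orderOf_eq_card_of_forall_mem_zpowers hg]
    exact orderOf_dvd_of_pow_eq_one (by rwa [pow_mul])
  obtain ⟨i, rfl⟩ := Nat.dvd_of_mul_dvd_mul_right hm n_dvd
  exact ⟨g ^ i, by rw [← pow_mul, mul_comm]⟩

section FiniteField

variable {k k' : Type*} [Field k] [Field k'] [Algebra k k'] {n : ℕ}

theorem natCast_ne_zero_of_natCard_modEq_one [Finite k] (hn : Nat.card k ≡ 1 [MOD n]) :
    (n : k) ≠ 0 := by
  obtain ⟨j, hj⟩ := (Nat.modEq_iff_dvd' Nat.card_pos).mp hn.symm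
  intro n_eq_zero
  have card_eq : Nat.card k = n * j + 1 := by have := Nat.card_pos (α := k); omega
  have card_cast : (Nat.card k : k) = 0 := by
    have := Fintype.ofFinite k
    rw [Nat.card_eq_fintype_card, FiniteField.cast_card_eq_zero]
  simp [card_eq, n_eq_zero] at card_cast

theorem natCard_modEq_one_of_algebra [Finite k'] (hn : Nat.card k ≡ 1 [MOD n]) :
    Nat.card k' ≡ 1 [MOD n] := by
  rw [Module.natCard_eq_pow_finrank (K := k)]
  simpa only [one_pow] using hn.pow (Module.finrank k k')

theorem mem_range_algebraMap_of_pow_eq_one [Finite k] (hn : Nat.card k ≡ 1 [MOD n]) {x : k'}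
    (hx : x ^ n = 1) : x ∈ (algebraMap k k').range := by
  have := Fintype.ofFinite k
  obtain ⟨j, hj⟩ := (Nat.modEq_iff_dvd' Nat.card_pos).mp hn.symm
  have pow_card : x ^ Fintype.card k = x := by
    rw [← Nat.card_eq_fintype_card, ← Nat.sub_add_cancel (Nat.card_pos (α := k)), hj, pow_succ,
      pow_mul, hx, one_pow, one_mul]
  refine Splits.mem_range_of_isRoot (f := X ^ Fintype.card k - X) ?_ ?_ ?_
  · simpa using (FiniteField.isSplittingField_sub k k).splits
  · exact FiniteField.X_pow_card_sub_X_ne_zero k Fintype.one_lt_card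
  · simp [pow_card]

end FiniteField

theorem exists_pow_eq_of_pow_eq_residue {B : Type*} [CommRing B] [HenselianLocalRing B] {n : ℕ}
    (hn : (n : ResidueField B) ≠ 0) {u : Bˣ} {y : ResidueField B}
    (hy : y ^ n = residue B u) : ∃ v : Bˣ, v ^ n = u := by
  have n_ne_zero : n ≠ 0 := by rintro rfl; simp at hn
  obtain ⟨b, rfl⟩ := residue_surjective y
  have residue_b_ne_zero : residue B b ≠ 0 := by
    have residue_u_ne_zero := (residue_ne_zero_iff_isUnit (u : B)).mpr u.isUnit
    exact fun hb ↦ residue_u_ne_zero (by rw [← hy, hb, zero_pow n_ne_zero])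
  have root_mod : (X ^ n - C (u : B)).eval b ∈ maximalIdeal B := by
    rw [← residue_eq_zero_iff, eval_sub, eval_X_pow, eval_C, map_sub, map_pow, hy, sub_self]
  have simple_mod : IsUnit ((X ^ n - C (u : B)).derivative.eval b) := by
    rw [← residue_ne_zero_iff_isUnit, derivative_sub, derivative_C, sub_zero, derivative_X_pow,
      eval_mul, eval_C, eval_X_pow, map_mul, map_pow, map_natCast]
    exact mul_ne_zero hn (pow_ne_zero _ residue_b_ne_zero)
  obtain ⟨v, hv, -⟩ := HenselianLocalRing.is_henselian (X ^ n - C (u : B))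
    (monic_X_pow_sub_C _ n_ne_zero) b root_mod simple_mod
  have pow_v : v ^ n = u := by simpa [IsRoot, sub_eq_zero] using hv
  obtain ⟨v, rfl⟩ := (isUnit_pow_iff n_ne_zero).mp (pow_v ▸ u.isUnit)
  exact ⟨v, Units.ext pow_v⟩

section Norm

theorem comap_algHom_eq_maximalIdeal {A B C : Type*} [CommRing A] [CommRing B] [CommRing C]
    [Algebra A B] [Algebra A C] [IsLocalRing B] [Algebra.IsIntegral A B] [Algebra.IsIntegral A C]
    (f : B →ₐ[A] C) (P : Ideal C) [P.IsMaximal] : P.comap f = maximalIdeal B := by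
  refine eq_maximalIdeal (Ideal.isMaximal_of_isIntegral_of_isMaximal_comap (R := A) _ ?_)
  have : (P.comap f).comap (algebraMap A B) = P.comap (algebraMap A C) := by
    ext; simp [Ideal.mem_comap]
  rw [this]
  exact Ideal.isMaximal_comap_of_isIntegral_of_isMaximal P

variable {A B K L : Type*} [CommRing A] [IsLocalRing A] [CommRing B] [Algebra A B]
  [Field K] [Field L] [Algebra A K] [Algebra K L] [Algebra A L] [IsScalarTower A K L]
  [Algebra B L] [IsScalarTower A B L] [FiniteDimensional K L] [Algebra.IsSeparable K L]

theorem residue_eq_pow_finrank_of_norm_eq [IsLocalRing B] [Algebra.IsIntegral A B]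
    {x : B} {a c : A} (hx : residue B x = residue B (algebraMap A B c))
    (norm_x : Algebra.norm K (algebraMap B L x) = algebraMap A K a) :
    residue A a = residue A c ^ Module.finrank K L := by
  let Ω := AlgebraicClosure K
  let C := integralClosure A Ω
  obtain ⟨P, hP⟩ := Ideal.exists_maximal C
  let conj (τ : L →ₐ[K] Ω) : B →ₐ[A] C :=
    ((τ.restrictScalars A).comp (IsScalarTower.toAlgHom A B L)).codRestrict C fun y ↦
      (Algebra.IsIntegral.isIntegral (R := A) y).map _
  have mk_conj (τ : L →ₐ[K] Ω) :
      Ideal.Quotient.mk P (conj τ x) = Ideal.Quotient.mk P (algebraMap A C c) := by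
    rw [Ideal.Quotient.eq, ← (conj τ).commutes, ← map_sub, ← Ideal.mem_comap,
      comap_algHom_eq_maximalIdeal (conj τ)]
    exact Ideal.Quotient.eq.mp hx
  have prod_conj : ∏ τ : L →ₐ[K] Ω, conj τ x = algebraMap A C a := by
    refine Subtype.val_injective ?_
    have norm_eq := Algebra.norm_eq_prod_embeddings K Ω (algebraMap B L x)
    rw [norm_x, ← IsScalarTower.algebraMap_apply] at norm_eq
    rw [SubmonoidClass.coe_finsetProd]
    exact norm_eq.symm
  have mk_eq : Ideal.Quotient.mk P (algebraMap A C a) =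
      Ideal.Quotient.mk P (algebraMap A C (c ^ Module.finrank K L)) := by
    rw [← prod_conj, map_prod, Finset.prod_congr rfl fun τ _ ↦ mk_conj τ, Finset.prod_const,
      Finset.card_univ, AlgHom.card, map_pow, map_pow]
  rw [← map_pow]
  refine Ideal.Quotient.eq.mpr ?_
  rw [← comap_algHom_eq_maximalIdeal (Algebra.ofId A C) P, Ideal.mem_comap, map_sub]
  exact Ideal.Quotient.eq.mp mk_eq

theorem exists_pow_eq_residue_of_norm_eq_pow [IsLocalRing B] [Module.Finite A B]
    [IsLocalHom (algebraMap A B)] [Finite (ResidueField A)] {n : ℕ}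
    (hn : Nat.card (ResidueField A) ≡ 1 [MOD n]) (hcop : (Module.finrank K L).Coprime n)
    {u : Bˣ} {w : Aˣ} (norm_u : Algebra.norm K (algebraMap B L u) = algebraMap A K w ^ n) :
    ∃ y : (ResidueField B)ˣ, y ^ n = Units.map (residue B).toMonoidHom u := by
  have : Finite (ResidueField B) := Module.finite_of_finite (ResidueField A)
  obtain ⟨m, hm⟩ := (Nat.modEq_iff_dvd' Nat.card_pos).mp
    (natCard_modEq_one_of_algebra (k' := ResidueField B) hn).symm
  have pow_nm (z : (ResidueField B)ˣ) : z ^ (n * m) = 1 := by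
    rw [← hm, ← Nat.card_units, pow_card_eq_one']
  rw [← Nat.card_units] at hm
  refine exists_pow_eq_of_pow_eq_one hm ?_
  set y : (ResidueField B)ˣ := Units.map (residue B).toMonoidHom u ^ m with hy
  have y_pow_n : y ^ n = 1 := by rw [hy, ← pow_mul, mul_comm, pow_nm]
  obtain ⟨c, hc⟩ : ∃ c : A, residue B (algebraMap A B c) = y := by
    obtain ⟨c', hc'⟩ := mem_range_algebraMap_of_pow_eq_one hn (congrArg Units.val y_pow_n)
    obtain ⟨c, rfl⟩ := residue_surjective c'
    exact ⟨c, hc'⟩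
  have residue_c : residue A ((w : A) ^ (n * m)) = residue A c ^ Module.finrank K L :=
    residue_eq_pow_finrank_of_norm_eq (K := K) (L := L) (x := (u : B) ^ m)
      (by simp [hc, hy]) (by simp [norm_u, pow_mul])
  have y_pow_finrank : y ^ Module.finrank K L = 1 := by
    have residue_w : residue B (algebraMap A B w) ^ (n * m) = 1 :=
      congrArg Units.val (pow_nm (Units.map ((residue B).comp (algebraMap A B)).toMonoidHom w))
    ext
    calc (y : ResidueField B) ^ Module.finrank K L
        = algebraMap (ResidueField A) _ (residue A c ^ Module.finrank K L) := by
          rw [map_pow, ResidueField.algebraMap_residue, hc]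
      _ = 1 := by rw [← residue_c, ResidueField.algebraMap_residue, map_pow, map_pow, residue_w]
  simpa only [hcop.gcd_eq_one, pow_one] using pow_gcd_eq_one.mpr ⟨y_pow_finrank, y_pow_n⟩

theorem exists_pow_eq_of_norm_eq_pow [HenselianLocalRing B] [Module.Finite A B]
    [IsLocalHom (algebraMap A B)] [Finite (ResidueField A)] {n : ℕ}
    (hn : Nat.card (ResidueField A) ≡ 1 [MOD n]) (hcop : (Module.finrank K L).Coprime n)
    {u : Bˣ} {w : Aˣ} (norm_u : Algebra.norm K (algebraMap B L u) = algebraMap A K w ^ n) :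
    ∃ v : Bˣ, v ^ n = u := by
  have n_ne_zero : (n : ResidueField B) ≠ 0 := by
    rw [← map_natCast (algebraMap (ResidueField A) _), _root_.map_ne_zero]
    exact natCast_ne_zero_of_natCard_modEq_one hn
  obtain ⟨y, hy⟩ := exists_pow_eq_residue_of_norm_eq_pow hn hcop norm_u
  exact exists_pow_eq_of_pow_eq_residue n_ne_zero (congrArg Units.val hy)

end Norm

section Padic

variable (q : ℕ) [Fact q.Prime] (K : Type*) [Field K] [Algebra ℚ_[q] K] [FiniteDimensional ℚ_[q] K]
  [Algebra ℤ_[q] K] [IsScalarTower ℤ_[q] ℚ_[q] K]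

theorem finite_integralClosure_padicInt : Module.Finite ℤ_[q] (integralClosure ℤ_[q] K) :=
  IsIntegralClosure.finite ℤ_[q] ℚ_[q] K _

theorem henselianLocalRing_integralClosure_padicInt :
    HenselianLocalRing (integralClosure ℤ_[q] K) :=
  have := finite_integralClosure_padicInt q K
  henselianLocalRing_of_finite ℤ_[q]

theorem finite_residueField_integralClosure_padicInt [IsLocalRing (integralClosure ℤ_[q] K)] :
    Finite (ResidueField (integralClosure ℤ_[q] K)) := by
  have := finite_integralClosure_padicInt q K
  have : FaithfulSMul ℤ_[q] K := .trans ℤ_[q] ℚ_[q] K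
  have : FaithfulSMul ℤ_[q] (integralClosure ℤ_[q] K) := .tower_bot ℤ_[q] _ K
  have : Finite (ResidueField ℤ_[q]) := .of_equiv _ PadicInt.residueField.symm.toEquiv
  exact ResidueField.finite_of_finite this

end Padic

theorem stmt_0_general (q : ℕ) [Fact q.Prime] (n : ℕ)
    (F E : Type*) [Field F] [Field E]
    [Algebra ℚ_[q] F] [FiniteDimensional ℚ_[q] F]
    [Algebra ℤ_[q] F] [IsScalarTower ℤ_[q] ℚ_[q] F]
    [Algebra F E] [FiniteDimensional F E] (hcop : (Module.finrank F E).Coprime n)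
    [Algebra ℚ_[q] E] [IsScalarTower ℚ_[q] F E]
    [Algebra ℤ_[q] E] [IsScalarTower ℤ_[q] ℚ_[q] E]
    [IsLocalRing (integralClosure ℤ_[q] F)]
    (hres : Nat.card (ResidueField (integralClosure ℤ_[q] F)) ≡ 1 [MOD n])
    (u : (integralClosure ℤ_[q] E)ˣ)
    (hu : ∃ w : (integralClosure ℤ_[q] F)ˣ, Algebra.norm F (u : E) = (w : F) ^ n) :
    ∃ w : (integralClosure ℤ_[q] E)ˣ, u = w ^ n := by
  let A := integralClosure ℤ_[q] F
  let B := integralClosure ℤ_[q] E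
  have : FiniteDimensional ℚ_[q] E := .trans ℚ_[q] F E
  have : CharZero F := charZero_of_injective_algebraMap (algebraMap ℚ_[q] F).injective
  have : IsScalarTower ℤ_[q] F E := .of_algebraMap_eq fun x ↦ by
    rw [IsScalarTower.algebraMap_apply ℤ_[q] ℚ_[q] E, IsScalarTower.algebraMap_apply ℚ_[q] F E,
      ← IsScalarTower.algebraMap_apply ℤ_[q] ℚ_[q] F]
  have : HenselianLocalRing B := henselianLocalRing_integralClosure_padicInt q E
  have : Finite (ResidueField A) := finite_residueField_integralClosure_padicInt q F
  let f : A →ₐ[ℤ_[q]] B := (IsScalarTower.toAlgHom ℤ_[q] F E).mapIntegralClosure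
  let _ : Algebra A B := f.toAlgebra
  have : IsScalarTower ℤ_[q] A B := .of_algebraMap_eq' f.comp_algebraMap.symm
  have : IsScalarTower A B E := .of_algebraMap_eq fun _ ↦ rfl
  have : FaithfulSMul A B := (faithfulSMul_iff_algebraMap_injective A B).mpr fun _ _ hxy ↦
    Subtype.ext ((algebraMap F E).injective (congrArg Subtype.val hxy))
  have : Module.Finite ℤ_[q] B := finite_integralClosure_padicInt q E
  have : Module.Finite A B := .of_restrictScalars_finite ℤ_[q] A B
  have : IsLocalHom (algebraMap A B) := Algebra.IsIntegral.isLocalHom A B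
  obtain ⟨w, hw⟩ := hu
  obtain ⟨v, hv⟩ := exists_pow_eq_of_norm_eq_pow (K := F) (L := E) (u := u) (w := w) hres hcop hw
  exact ⟨v, hv.symm⟩

/-- Let `q ≠ 3` be a rational prime, `F` a finite extension of `ℚ_q` whose
residue field has cardinality `≡ 1 (mod 3)`, and `E` a quadratic extension of `F`.
Then the norm-induced map `O_E^×/(O_E^×)³ → O_F^×/(O_F^×)³` has trivial kernel. -/
theorem stmt_0 (q : ℕ) [Fact q.Prime] (hq3 : q ≠ 3)
    (F E : Type) [Field F] [Field E]
    [Algebra ℚ_[q] F] [FiniteDimensional ℚ_[q] F]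
    [Algebra ℤ_[q] F] [IsScalarTower ℤ_[q] ℚ_[q] F]
    [Algebra F E] (hquad : Module.finrank F E = 2)
    [Algebra ℚ_[q] E] [IsScalarTower ℚ_[q] F E]
    [Algebra ℤ_[q] E] [IsScalarTower ℤ_[q] ℚ_[q] E]
    [IsLocalRing (integralClosure ℤ_[q] F)]
    (hres : Nat.card (IsLocalRing.ResidueField (integralClosure ℤ_[q] F)) % 3 = 1)
    (u : (integralClosure ℤ_[q] E)ˣ)
    (hu : ∃ w : (integralClosure ℤ_[q] F)ˣ,
        Algebra.norm F ((↑(u : (integralClosure ℤ_[q] E)) : E))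
          = ((↑(w : (integralClosure ℤ_[q] F)) : F)) ^ 3) :
    ∃ w : (integralClosure ℤ_[q] E)ˣ, u = w ^ 3 := by
  have : FiniteDimensional F E := .of_finrank_pos (by omega)
  exact stmt_0_general q 3 F E (by norm_num [hquad]) hres u hu
end

section
/- Let q be a rational prime, let F be a finite extension of ℚ_q, and let E be a quadratic field extension of F with normalized valuation v_E. Let x ∈ E^× be such that N_{E/F}(x) ∈ (F^×)³. Then there exists a unit u ∈ O_E^× with N_{E/F}(u) ∈ (O_F^×)³ and x·u^{-1} ∈ (E^×)³ if and only if v_E(x) ≡ 0 (mod 3). -/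
/-!
The valuation `v` is a surjection of groups whose kernel is the group of integral units. For any
surjection of groups `v`, an element `x` is an `n`-th power times an element of `ker v` exactly when
`v x` is an `n`-th power. The condition on the norm then comes for free: if `x = u * z ^ n` and
`N x = y ^ n`, then `N u = (y / N z) ^ n`, and `y / N z` is an integral unit because its `n`-th
power is an integral unit.
-/

section Groups

theorem exists_mem_ker_mul_inv_eq_pow_iff {G H : Type*} [Group G] [Group H] {v : G →* H}
    (hv : Function.Surjective v) (n : ℕ) (x : G) :
    (∃ u ∈ v.ker, ∃ z : G, x * u⁻¹ = z ^ n) ↔ ∃ c : H, v x = c ^ n := by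
  constructor
  · rintro ⟨u, hu, z, hz⟩
    refine ⟨v z, ?_⟩
    rw [← map_pow, ← hz, map_mul, map_inv, v.mem_ker.mp hu, inv_one, mul_one]
  · rintro ⟨c, hc⟩
    obtain ⟨z, rfl⟩ := hv c
    refine ⟨(z ^ n)⁻¹ * x, ?_, z, by group⟩
    rw [v.mem_ker, map_mul, map_inv, map_pow, hc, inv_mul_cancel]

theorem exists_map_eq_pow_of_mul_inv_eq_pow {G H : Type*} [Group G] [CommGroup H] {n : ℕ}
    (f : G →* H) {x u : G} (hx : ∃ y : H, f x = y ^ n) (hxu : ∃ z : G, x * u⁻¹ = z ^ n) :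
    ∃ w : H, f u = w ^ n := by
  obtain ⟨y, hy⟩ := hx
  obtain ⟨z, hz⟩ := hxu
  have hu : u = (z ^ n)⁻¹ * x := by rw [← hz]; group
  refine ⟨(f z)⁻¹ * y, ?_⟩
  rw [hu, map_mul, map_inv, map_pow, hy, mul_pow, inv_pow]

theorem exists_eq_pow_iff_toAdd_emod_eq_zero (n : ℕ) (m : Multiplicative ℤ) :
    (∃ c : Multiplicative ℤ, m = c ^ n) ↔ m.toAdd % n = 0 := by
  rw [← Int.dvd_iff_emod_eq_zero, dvd_def, Multiplicative.ofAdd.surjective.exists]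
  simp only [← Multiplicative.toAdd.injective.eq_iff, toAdd_pow, toAdd_ofAdd, nsmul_eq_mul]

theorem exists_val_eq_pow_iff {M : Type*} [CommMonoid M] {n : ℕ} (hn : n ≠ 0) (x : Mˣ) :
    (∃ z : M, (x : M) = z ^ n) ↔ ∃ z : Mˣ, x = z ^ n := by
  constructor
  · rintro ⟨z, hz⟩
    obtain ⟨z, rfl⟩ := (isUnit_pow_iff hn).mp (hz ▸ x.isUnit)
    exact ⟨z, Units.ext hz⟩
  · rintro ⟨z, rfl⟩
    exact ⟨z, z.val_pow_eq_pow_val n⟩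

theorem exists_units_submonoid_iff {M : Type*} [Monoid M] (S : Submonoid M) (p : M → Prop) :
    (∃ u : Sˣ, p (u : S)) ↔ ∃ u ∈ S.units, p u := by
  constructor
  · rintro ⟨u, hu⟩
    exact ⟨S.unitsEquivUnitsType.symm u, SetLike.coe_mem _, hu⟩
  · rintro ⟨u, hu, hpu⟩
    exact ⟨S.unitsEquivUnitsType ⟨u, hu⟩, hpu⟩

end Groups

section IntegralUnits

variable {A F E : Type*} [CommRing A] [Field F] [Field E]
  [Algebra A F] [Algebra A E] [Algebra F E] [IsScalarTower A F E]

theorem mem_units_integralClosure_of_pow_mem {B : Type*} [CommRing B] [Algebra A B]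
    {n : ℕ} (hn : n ≠ 0) {w : Bˣ} (hw : w ^ n ∈ (integralClosure A B).units) :
    w ∈ (integralClosure A B).units := by
  have hw_inv : w⁻¹ ^ n ∈ (integralClosure A B).units := inv_pow w n ▸ inv_mem hw
  exact ⟨IsIntegral.of_pow hn.pos hw.1, IsIntegral.of_pow hn.pos hw_inv.1⟩

theorem map_norm_mem_units_integralClosure {u : Eˣ} (hu : u ∈ (integralClosure A E).units) :
    Units.map (Algebra.norm F) u ∈ (integralClosure A F).units :=
  ⟨Algebra.isIntegral_norm F hu.1, Algebra.isIntegral_norm F hu.2⟩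

/-- The value group `Γ` is multiplicative but ordered as an additive one: integral elements have
`1 ≤ v z`, the reverse of the convention for `Valuation`. -/
theorem ker_eq_units_integralClosure {Γ : Type*} [CommGroup Γ] [PartialOrder Γ]
    [IsOrderedMonoid Γ] (v : Eˣ →* Γ)
    (hv_ring : ∀ z : E, z ∈ integralClosure A E ↔ z = 0 ∨ ∃ zu : Eˣ, (zu : E) = z ∧ 1 ≤ v zu) :
    v.ker = (integralClosure A E).units := by
  have val_mem_iff (z : Eˣ) : (z : E) ∈ integralClosure A E ↔ 1 ≤ v z := by
    simp [hv_ring, Units.val_inj]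
  ext u
  calc u ∈ v.ker ↔ 1 ≤ v u ∧ 1 ≤ v u⁻¹ := by
        rw [v.mem_ker, map_inv, one_le_inv', and_comm, antisymm_iff]
    _ ↔ u ∈ (integralClosure A E).units := by
        rw [← val_mem_iff, ← val_mem_iff]
        exact (Submonoid.mem_units_iff _ u).symm

theorem exists_integral_unit_norm_eq_pow_iff {Γ : Type*} [Group Γ] {n : ℕ} (hn : n ≠ 0)
    {v : Eˣ →* Γ} (hv_surj : Function.Surjective v)
    (hv_ker : v.ker = (integralClosure A E).units) {x : Eˣ}
    (hx : ∃ y : Fˣ, Units.map (Algebra.norm F) x = y ^ n) :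
    (∃ u ∈ (integralClosure A E).units,
        (∃ w ∈ (integralClosure A F).units, Units.map (Algebra.norm F) u = w ^ n) ∧
        ∃ z : Eˣ, x * u⁻¹ = z ^ n) ↔
      ∃ c : Γ, v x = c ^ n := by
  rw [← exists_mem_ker_mul_inv_eq_pow_iff hv_surj, hv_ker]
  refine exists_congr fun u ↦ and_congr_right fun hu ↦ and_iff_right_of_imp fun hxu ↦ ?_
  obtain ⟨w, hw⟩ := exists_map_eq_pow_of_mul_inv_eq_pow (Units.map (Algebra.norm F)) hx hxu
  have hwn : w ^ n ∈ (integralClosure A F).units :=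
    hw ▸ map_norm_mem_units_integralClosure hu
  exact ⟨w, mem_units_integralClosure_of_pow_mem hn hwn, hw⟩

end IntegralUnits

theorem stmt_6_general {A F E Γ : Type*} [CommRing A] [Field F] [Field E]
    [Algebra A F] [Algebra A E] [Algebra F E] [IsScalarTower A F E] [FiniteDimensional F E]
    [CommGroup Γ] [PartialOrder Γ] [IsOrderedMonoid Γ] {n : ℕ} (hn : n ≠ 0)
    (v : Eˣ →* Γ) (hv_surj : Function.Surjective v)
    (hv_ring : ∀ z : E, z ∈ integralClosure A E ↔ z = 0 ∨ ∃ zu : Eˣ, (zu : E) = z ∧ 1 ≤ v zu)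
    (x : Eˣ) (hx : ∃ y : F, Algebra.norm F (x : E) = y ^ n) :
    (∃ u : (integralClosure A E)ˣ,
        (∃ w : (integralClosure A F)ˣ,
          Algebra.norm F ((u : integralClosure A E) : E) = ((w : integralClosure A F) : F) ^ n) ∧
        ∃ z : E, (x : E) * ((u : integralClosure A E) : E)⁻¹ = z ^ n) ↔
      ∃ c : Γ, v x = c ^ n := by
  have hx_units : ∃ y : Fˣ, Units.map (Algebra.norm F) x = y ^ n :=
    (exists_val_eq_pow_iff hn _).mp hx
  rw [← exists_integral_unit_norm_eq_pow_iff hn hv_surj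
    (ker_eq_units_integralClosure v hv_ring) hx_units]
  refine (exists_units_submonoid_iff (integralClosure A E).toSubmonoid fun u : E ↦
    (∃ w : (integralClosure A F)ˣ, Algebra.norm F u = ((w : integralClosure A F) : F) ^ n) ∧
      ∃ z : E, (x : E) * u⁻¹ = z ^ n).trans ?_
  refine exists_congr fun u ↦ and_congr_right fun _ ↦ and_congr ?_ ?_
  · refine (exists_units_submonoid_iff (integralClosure A F).toSubmonoid
      fun w : F ↦ Algebra.norm F (u : E) = w ^ n).trans ?_
    simp only [Units.ext_iff, Units.coe_map, Units.val_pow_eq_pow_val]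
  · rw [← exists_val_eq_pow_iff hn, Units.val_mul, Units.val_inv_eq_inv_val]

/-- Let `q` be a rational prime, `F` a finite extension of `ℚ_q`, and `E` a
quadratic field extension of `F` with normalized valuation `v_E` (a surjective homomorphism
`E^× → ℤ` whose nonnegativity locus is exactly the units' integral part, i.e. whose
valuation ring is `O_E`).  Let `x ∈ E^×` with `N_{E/F}(x) ∈ (F^×)³`.  Then there is a unit
`u ∈ O_E^×` with `N_{E/F}(u) ∈ (O_F^×)³` and `x·u⁻¹ ∈ (E^×)³` iff `v_E(x) ≡ 0 (mod 3)`. -/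
theorem stmt_6 (q : ℕ) [Fact q.Prime]
    (F E : Type) [Field F] [Field E]
    [Algebra ℚ_[q] F] [FiniteDimensional ℚ_[q] F]
    [Algebra ℤ_[q] F] [IsScalarTower ℤ_[q] ℚ_[q] F]
    [Algebra F E] (hquad : Module.finrank F E = 2)
    [Algebra ℚ_[q] E] [IsScalarTower ℚ_[q] F E]
    [Algebra ℤ_[q] E] [IsScalarTower ℤ_[q] ℚ_[q] E]
    (vE : Eˣ →* Multiplicative ℤ) (hv_surj : Function.Surjective vE)
    (hv_ring : ∀ z : E, z ∈ integralClosure ℤ_[q] E ↔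
      z = 0 ∨ ∃ zu : Eˣ, (zu : E) = z ∧ 0 ≤ Multiplicative.toAdd (vE zu))
    (x : Eˣ) (hx : ∃ y : F, Algebra.norm F ((x : E)) = y ^ 3) :
    (∃ u : (integralClosure ℤ_[q] E)ˣ,
        (∃ w : (integralClosure ℤ_[q] F)ˣ,
          Algebra.norm F ((↑(u : (integralClosure ℤ_[q] E)) : E))
            = ((↑(w : (integralClosure ℤ_[q] F)) : F)) ^ 3) ∧
        ∃ z : E, (x : E) * ((↑(u : (integralClosure ℤ_[q] E)) : E))⁻¹ = z ^ 3) ↔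
      Multiplicative.toAdd (vE x) % 3 = 0 := by
  have : IsScalarTower ℤ_[q] F E := .to₁₃₄ ℤ_[q] ℚ_[q] F E
  have : FiniteDimensional F E := Module.finite_of_finrank_eq_succ hquad
  exact (stmt_6_general three_ne_zero vE hv_surj hv_ring x hx).trans
    (exists_eq_pow_iff_toAdd_emod_eq_zero 3 (vE x))
end

section
/- Let F be a number field, p a prime number, and S a finite set of nonzero prime ideals of O_F. Then |dim_{𝔽_p} Cl(F)[p] − dim_{𝔽_p} Cl_S(F)[p]| ≤ 3|S|. -/
open IsDedekindDomain NumberField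

/-!
Some power of the product of the primes in `S` is principal, say generated by `a`, and the ring of
`S`-integers is the localization of `O_F` away from `a`. Extension of ideals to a localization
induces a surjection of class groups whose kernel is generated by the classes of the primes that
become trivial; here this is a surjection `Cl(F) → Cl_S(F)` whose kernel `N` is generated by at most
`|S|` elements.

For a finite abelian group `|G[p]| = |G / G^p|`. Hence `|Cl_S(F)[p]|` divides `|Cl(F)[p]|`, and
`|N[p]|` divides `p ^ |S|`, so that left exactness of `p`-torsion bounds `|Cl(F)[p]|` by
`p ^ |S| * |Cl_S(F)[p]|`.
-/

open scoped nonZeroDivisors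

section PowTorsion

variable {G H : Type*} [CommGroup G] [CommGroup H] (n : ℕ)

variable (G) in
/-- The `n`-torsion subgroup `G[n]` of a commutative group, as the kernel of the `n`-th power
map. -/
abbrev powTorsion : Subgroup G := (powMonoidHom n : G →* G).ker

theorem card_powTorsion_eq_index_range [Finite G] :
    Nat.card (powTorsion G n) = (powMonoidHom n : G →* G).range.index :=
  Subgroup.index_range.symm

theorem card_powTorsion_dvd_pow_rank [Finite G] :
    Nat.card (powTorsion G n) ∣ n ^ Group.rank G := by
  let N := (powMonoidHom n : G →* G).range
  have pow_eq_one : ∀ x : G ⧸ N, x ^ n = 1 := by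
    rintro ⟨g⟩
    exact (QuotientGroup.eq_one_iff (g ^ n)).2 ⟨g, rfl⟩
  have rank_le : Group.rank (G ⧸ N) ≤ Group.rank G :=
    Group.rank_le_of_surjective (QuotientGroup.mk' N) (QuotientGroup.mk'_surjective N)
  calc
    Nat.card (powTorsion G n) = Nat.card (G ⧸ N) := card_powTorsion_eq_index_range n
    _ ∣ n ^ Group.rank (G ⧸ N) := card_dvd_exponent_pow_rank' _ pow_eq_one
    _ ∣ n ^ Group.rank G := pow_dvd_pow n rank_le

theorem card_powTorsion_dvd_of_surjective [Finite G] {φ : G →* H}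
    (hφ : Function.Surjective φ) :
    Nat.card (powTorsion H n) ∣ Nat.card (powTorsion G n) := by
  have : Finite H := Finite.of_surjective φ hφ
  rw [card_powTorsion_eq_index_range, card_powTorsion_eq_index_range,
    ← Subgroup.index_comap_of_surjective _ hφ]
  apply Subgroup.index_dvd_of_le
  rintro _ ⟨g, rfl⟩
  exact ⟨φ g, (map_pow φ g n).symm⟩

theorem card_powTorsion_dvd_card_ker_mul (φ : G →* H) :
    Nat.card (powTorsion G n) ∣ Nat.card (powTorsion φ.ker n) * Nat.card (powTorsion H n) := by
  have card_ker : Nat.card (φ.ker.subgroupOf (powTorsion G n)) = Nat.card (powTorsion φ.ker n) :=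
    Nat.card_congr
      { toFun x := ⟨⟨x.1.1, x.2⟩, Subtype.ext x.1.2⟩
        invFun x := ⟨⟨x.1.1, congrArg Subtype.val x.2⟩, x.1.2⟩ }
  have map_le : (powTorsion G n).map φ ≤ powTorsion H n := by
    rintro _ ⟨g, hg, rfl⟩
    exact (map_pow φ g n).symm.trans ((congrArg φ hg).trans φ.map_one)
  rw [← Subgroup.card_mul_index (φ.ker.subgroupOf (powTorsion G n)), card_ker]
  refine mul_dvd_mul_left _ ?_
  change φ.ker.relIndex (powTorsion G n) ∣ _
  rw [Subgroup.relIndex_ker]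
  exact Subgroup.card_dvd_of_le map_le

end PowTorsion

theorem rank_closure_image_finset_le {ι G : Type*} [Group G] (f : ι → G) (s : Finset ι) :
    Group.rank (Subgroup.closure (f '' s)) ≤ s.card := by
  have rank_le : Group.rank (Subgroup.closure (f '' s)) ≤ Nat.card (f '' s) :=
    Subgroup.rank_closure_finite_le_nat_card _
  exact rank_le.trans ((Nat.card_image_le s.finite_toSet).trans_eq (by simp))

section Localization

variable {R : Type*} [CommRing R] [IsDedekindDomain R]

/-- The ideal class of a nonzero prime ideal of a Dedekind domain. -/
noncomputable def primeClass (v : HeightOneSpectrum R) : ClassGroup R :=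
  ClassGroup.mk0 ⟨v.asIdeal, mem_nonZeroDivisors_of_ne_zero v.ne_bot⟩

theorem mk0_mem_closure_primeClass (I : (Ideal R)⁰) :
    ClassGroup.mk0 I ∈ Subgroup.closure (primeClass '' {v | I.1 ≤ v.asIdeal}) := by
  obtain ⟨I, hI⟩ := I
  induction I using UniqueFactorizationMonoid.induction_on_prime with
  | h₁ => simp at hI
  | h₂ I hunit =>
    rw [(ClassGroup.mk0_eq_one_iff hI).2 (Ideal.isUnit_iff.1 hunit ▸ inferInstance)]
    exact one_mem _
  | h₃ J P hJ hP ih =>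
    have hP₀ : P ∈ (Ideal R)⁰ := mem_nonZeroDivisors_of_ne_zero hP.ne_zero
    have hJ₀ : J ∈ (Ideal R)⁰ := mem_nonZeroDivisors_of_ne_zero hJ
    have class_P_mem : ClassGroup.mk0 ⟨P, hP₀⟩ ∈
        Subgroup.closure (primeClass '' {v | P * J ≤ v.asIdeal}) :=
      Subgroup.subset_closure
        ⟨⟨P, Ideal.isPrime_of_prime hP, hP.ne_zero⟩, (Ideal.mul_le_left : P * J ≤ P), rfl⟩
    have class_J_mem : ClassGroup.mk0 ⟨J, hJ₀⟩ ∈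
        Subgroup.closure (primeClass '' {v | P * J ≤ v.asIdeal}) :=
      Subgroup.closure_mono (Set.image_mono fun _ hv => Ideal.mul_le_right.trans hv) (ih hJ₀)
    exact map_mul ClassGroup.mk0 ⟨P, hP₀⟩ ⟨J, hJ₀⟩ ▸ mul_mem class_P_mem class_J_mem

theorem isDedekindDomain_of_isLocalization (B : Type*) [CommRing B] [IsDomain B] [Algebra R B]
    (M : Submonoid R) [IsLocalization M B] : IsDedekindDomain B := by
  refine IsLocalization.isDedekindDomain R (M := M)
    (le_nonZeroDivisors_of_noZeroDivisors fun h => ?_) B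
  exact (IsLocalization.map_units B (⟨0, h⟩ : M)).ne_zero (map_zero _)

variable (B : Type*) [CommRing B] [IsDomain B] [Algebra R B] [Module.IsTorsionFree R B]

theorem extendedHom_surjective_of_isLocalization (M : Submonoid R) [IsLocalization M B] :
    Function.Surjective (ClassGroup.extendedHom R B) := by
  have := isDedekindDomain_of_isLocalization B M
  intro c
  obtain ⟨J, rfl⟩ := ClassGroup.mk0_surjective c
  have map_under : (J.1.under R).map (algebraMap R B) = J.1 := IsLocalization.map_under M B J.1
  have under_ne_zero : J.1.under R ≠ 0 := fun h =>
    nonZeroDivisors.ne_zero J.2 (by rw [← map_under, h, Ideal.zero_eq_bot, Ideal.map_bot]; rfl)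
  refine ⟨ClassGroup.mk0 ⟨J.1.under R, mem_nonZeroDivisors_of_ne_zero under_ne_zero⟩, ?_⟩
  rw [ClassGroup.extendedHom_mk0]
  exact congrArg ClassGroup.mk0 (Subtype.ext map_under)

variable {B} in
theorem exists_mul_eq_span_singleton_of_isPrincipal_map (M : Submonoid R) [IsLocalization M B]
    {I : Ideal R} (hI : I ≠ 0)
    (hprincipal : (I.map (algebraMap R B)).IsPrincipal) :
    ∃ (C : Ideal R) (i : R), i ≠ 0 ∧ I * C = Ideal.span {i} ∧
      C.map (algebraMap R B) = ⊤ := by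
  have := isDedekindDomain_of_isLocalization B M
  have map_ne_zero : I.map (algebraMap R B) ≠ 0 := nonZeroDivisors.ne_zero
    (ClassGroup.extendedIdeal R B ⟨I, mem_nonZeroDivisors_of_ne_zero hI⟩).2
  obtain ⟨x, hx : I.map (algebraMap R B) = Ideal.span {x}⟩ := hprincipal
  obtain ⟨⟨i, m⟩, him : x * algebraMap R B m = algebraMap R B i⟩ :=
    (IsLocalization.mem_map_algebraMap_iff M B).1 (hx ▸ Ideal.mem_span_singleton_self x)
  have map_span : (Ideal.span {(i : R)}).map (algebraMap R B) = I.map (algebraMap R B) := by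
    rw [Ideal.map_span, Set.image_singleton, ← him, hx]
    exact Ideal.span_singleton_mul_right_unit (IsLocalization.map_units B m) x
  obtain ⟨C, hC⟩ : I ∣ Ideal.span {(i : R)} :=
    Ideal.dvd_iff_le.2 ((Ideal.span_singleton_le_iff_mem _).2 i.2)
  refine ⟨C, i, ?_, hC.symm, ?_⟩
  · intro hi
    rw [hi, Ideal.span_singleton_zero, Ideal.map_bot] at map_span
    exact map_ne_zero map_span.symm
  · rw [hC, Ideal.map_mul] at map_span
    exact mul_left_cancel₀ map_ne_zero (map_span.trans (Ideal.mul_top _).symm)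

theorem extendedHom_primeClass_eq_one_of_not_disjoint (M : Submonoid R) [IsLocalization M B]
    {v : HeightOneSpectrum R} (hv : ¬ Disjoint (M : Set R) v.asIdeal) :
    ClassGroup.extendedHom R B (primeClass v) = 1 := by
  have := isDedekindDomain_of_isLocalization B M
  have map_eq_top : v.asIdeal.map (algebraMap R B) = ⊤ :=
    not_ne_iff.1 (mt (IsLocalization.map_algebraMap_ne_top_iff_disjoint M B _).1 hv)
  rw [primeClass, ClassGroup.extendedHom_mk0, ClassGroup.mk0_eq_one_iff, map_eq_top]
  infer_instance

theorem ker_extendedHom_of_isLocalization (M : Submonoid R) [IsLocalization M B] :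
    (ClassGroup.extendedHom R B).ker =
      Subgroup.closure (primeClass '' {v | ¬ Disjoint (M : Set R) v.asIdeal}) := by
  have := isDedekindDomain_of_isLocalization B M
  apply le_antisymm
  · intro c hc
    obtain ⟨I, rfl⟩ := ClassGroup.mk0_surjective c
    rw [MonoidHom.mem_ker, ClassGroup.extendedHom_mk0, ClassGroup.mk0_eq_one_iff] at hc
    obtain ⟨C, i, hi, hIC, hC⟩ :=
      exists_mul_eq_span_singleton_of_isPrincipal_map M (nonZeroDivisors.ne_zero I.2) hc
    have C_ne_zero : C ≠ 0 := by
      rintro rfl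
      exact hi (Ideal.span_singleton_eq_bot.1 (hIC.symm.trans (mul_zero _)))
    let C₀ : (Ideal R)⁰ := ⟨C, mem_nonZeroDivisors_of_ne_zero C_ne_zero⟩
    have class_eq_inv : ClassGroup.mk0 I = (ClassGroup.mk0 C₀)⁻¹ :=
      ClassGroup.mk0_eq_mk0_inv_iff.2 ⟨i, hi, hIC⟩
    have C_meets_M : ¬ Disjoint (M : Set R) C := fun h =>
      (IsLocalization.map_algebraMap_ne_top_iff_disjoint M B C).2 h hC
    have primes_subset : {v : HeightOneSpectrum R | C ≤ v.asIdeal} ⊆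
        {v | ¬ Disjoint (M : Set R) v.asIdeal} :=
      fun v (hv : C ≤ v.asIdeal) h => C_meets_M (h.mono_right hv)
    rw [class_eq_inv]
    exact inv_mem (Subgroup.closure_mono (Set.image_mono primes_subset)
      (mk0_mem_closure_primeClass C₀))
  · rw [Subgroup.closure_le]
    rintro _ ⟨v, hv, rfl⟩
    exact extendedHom_primeClass_eq_one_of_not_disjoint B M hv

end Localization

section SInteger

variable {R : Type*} [CommRing R] [IsDedekindDomain R] (S : Finset (HeightOneSpectrum R))

theorem exists_ne_zero_forall_mem_asIdeal_iff (htorsion : IsMulTorsion (ClassGroup R)) :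
    ∃ a : R, a ≠ 0 ∧ ∀ v : HeightOneSpectrum R, a ∈ v.asIdeal ↔ v ∈ S := by
  let I : Ideal R := ∏ v ∈ S, v.asIdeal
  have I_ne_zero : I ≠ 0 := Finset.prod_ne_zero_iff.2 fun v _ => v.ne_bot
  let I₀ : (Ideal R)⁰ := ⟨I, mem_nonZeroDivisors_of_ne_zero I_ne_zero⟩
  obtain ⟨n, hn, class_pow⟩ : ∃ n, 0 < n ∧ ClassGroup.mk0 I₀ ^ n = 1 :=
    isOfFinOrder_iff_pow_eq_one.1 (htorsion _)
  rw [← map_pow, ClassGroup.mk0_eq_one_iff] at class_pow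
  obtain ⟨a, ha : I ^ n = Ideal.span {a}⟩ := class_pow
  refine ⟨a, ?_, fun v => ?_⟩
  · rintro rfl
    exact pow_ne_zero n I_ne_zero (ha.trans Ideal.span_singleton_zero)
  · rw [← Ideal.span_singleton_le_iff_mem, ← ha, v.isPrime.pow_le_iff hn.ne', v.isPrime.prod_le]
    refine ⟨fun ⟨w, hw, hwv⟩ => ?_, fun hv => ⟨v, hv, le_rfl⟩⟩
    exact HeightOneSpectrum.ext (w.isMaximal.eq_of_le v.isPrime.ne_top hwv) ▸ hw

variable {K : Type*} [Field K] [Algebra R K] [IsFractionRing R K] {S}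

theorem exists_mul_pow_mem_range_of_mem_integer {a : R} (ha₀ : a ≠ 0)
    (ha : ∀ v ∈ S, a ∈ v.asIdeal) {x : K}
    (hx : x ∈ (S : Set (HeightOneSpectrum R)).integer K) :
    ∃ n : ℕ, x * algebraMap R K a ^ n ∈ (algebraMap R K).range := by
  have valuation_pos (v : HeightOneSpectrum R) : 0 < v.valuation K (algebraMap R K a) :=
    (Valuation.pos_iff _).2 ((FaithfulSMul.algebraMap_eq_zero_iff R K).not.2 ha₀)
  have valuation_bound : ∀ v ∈ S, ∃ n : ℕ,
      v.valuation K x ≤ (v.valuation K (algebraMap R K a))⁻¹ ^ n := fun v hv =>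
    MulArchimedean.arch _ ((one_lt_inv₀ (valuation_pos v)).2
      ((v.valuation_lt_one_iff_mem a).2 (ha v hv)))
  choose! n hn using valuation_bound
  refine ⟨S.sup n, HeightOneSpectrum.mem_integers_of_valuation_le_one K _ fun v => ?_⟩
  have valuation_le : v.valuation K (algebraMap R K a) ≤ 1 := v.valuation_le_one a
  rw [map_mul, map_pow]
  by_cases hv : v ∈ S
  · calc
      _ ≤ (v.valuation K (algebraMap R K a))⁻¹ ^ n v * v.valuation K (algebraMap R K a) ^ n v :=
        mul_le_mul' (hn v hv) (pow_le_pow_right_of_le_one' valuation_le (Finset.le_sup hv))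
      _ = 1 := by rw [← mul_pow, inv_mul_cancel₀ (valuation_pos v).ne', one_pow]
  · exact mul_le_one' (hx v hv) (pow_le_one' valuation_le _)

variable (K)

theorem isLocalization_away_integer {a : R} (ha₀ : a ≠ 0)
    (ha : ∀ v : HeightOneSpectrum R, a ∈ v.asIdeal ↔ v ∈ S) :
    IsLocalization.Away a ((S : Set (HeightOneSpectrum R)).integer K) := by
  have inv_mem : (algebraMap R K a)⁻¹ ∈ (S : Set (HeightOneSpectrum R)).integer K := by
    intro v hv
    have valuation_eq_one : v.valuation K (algebraMap R K a) = 1 :=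
      v.valuation_eq_one_iff_notMem.2 (mt (ha v).1 hv)
    rw [map_inv₀, valuation_eq_one, inv_one]
  refine IsLocalization.Away.mk a ?_ ?_ ?_
  · exact IsUnit.of_mul_eq_one ⟨_, inv_mem⟩
      (Subtype.ext (mul_inv_cancel₀ ((FaithfulSMul.algebraMap_eq_zero_iff R K).not.2 ha₀)))
  · rintro ⟨x, hx⟩
    obtain ⟨n, r, hr⟩ := exists_mul_pow_mem_range_of_mem_integer ha₀ (fun v => (ha v).2) hx
    exact ⟨n, r, Subtype.ext hr.symm⟩
  · intro b c h
    exact ⟨0, by rw [IsFractionRing.injective R K (congrArg Subtype.val h)]⟩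

variable (S)

theorem extendedHom_integer_surjective (htorsion : IsMulTorsion (ClassGroup R)) :
    Function.Surjective
      (ClassGroup.extendedHom R ((S : Set (HeightOneSpectrum R)).integer K)) := by
  obtain ⟨a, ha₀, ha⟩ := exists_ne_zero_forall_mem_asIdeal_iff S htorsion
  have := isLocalization_away_integer K ha₀ ha
  exact extendedHom_surjective_of_isLocalization _ (Submonoid.powers a)

theorem ker_extendedHom_integer (htorsion : IsMulTorsion (ClassGroup R)) :
    (ClassGroup.extendedHom R ((S : Set (HeightOneSpectrum R)).integer K)).ker =
      Subgroup.closure (primeClass '' S) := by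
  obtain ⟨a, ha₀, ha⟩ := exists_ne_zero_forall_mem_asIdeal_iff S htorsion
  have := isLocalization_away_integer K ha₀ ha
  have primes_eq : {v : HeightOneSpectrum R | ¬ Disjoint (Submonoid.powers a : Set R) v.asIdeal} =
      S := by
    ext v
    rw [Set.mem_ofPred_eq, Ideal.disjoint_powers_iff_notMem _ v.isPrime.isRadical, not_not]
    exact ha v
  rw [ker_extendedHom_of_isLocalization _ (Submonoid.powers a), primes_eq]

theorem card_powTorsion_classGroup_dvd [Finite (ClassGroup R)] (n : ℕ) :
    Nat.card (powTorsion (ClassGroup R) n) ∣ n ^ S.card *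
      Nat.card (powTorsion (ClassGroup ((S : Set (HeightOneSpectrum R)).integer K)) n) := by
  let φ := ClassGroup.extendedHom R ((S : Set (HeightOneSpectrum R)).integer K)
  have rank_ker_le : Group.rank φ.ker ≤ S.card :=
    (Subgroup.rank_congr (ker_extendedHom_integer S K isMulTorsion_of_finite)).trans_le
      (rank_closure_image_finset_le primeClass S)
  exact (card_powTorsion_dvd_card_ker_mul n φ).trans (mul_dvd_mul_right
    ((card_powTorsion_dvd_pow_rank n).trans (pow_dvd_pow n rank_ker_le)) _)

end SInteger

theorem stmt_14_general {R K : Type*} [CommRing R] [IsDedekindDomain R] [Finite (ClassGroup R)]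
    [Field K] [Algebra R K] [IsFractionRing R K] {p : ℕ} (hp : 1 < p)
    (S : Finset (HeightOneSpectrum R)) {d₁ d₂ : ℕ}
    (h₁ : Nat.card {c : ClassGroup R // c ^ p = 1} = p ^ d₁)
    (h₂ : Nat.card {c : ClassGroup ((S : Set (HeightOneSpectrum R)).integer K) // c ^ p = 1} =
      p ^ d₂) :
    d₂ ≤ d₁ ∧ d₁ ≤ d₂ + S.card := by
  change Nat.card (powTorsion (ClassGroup R) p) = _ at h₁
  change Nat.card (powTorsion (ClassGroup ((S : Set (HeightOneSpectrum R)).integer K)) p) = _ at h₂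
  have lower := card_powTorsion_dvd_of_surjective p
    (extendedHom_integer_surjective S K isMulTorsion_of_finite)
  have upper := card_powTorsion_classGroup_dvd S K p
  rw [h₁, h₂] at lower upper
  rw [← pow_add, add_comm] at upper
  exact ⟨(Nat.pow_dvd_pow_iff_le_right hp).1 lower, (Nat.pow_dvd_pow_iff_le_right hp).1 upper⟩

/-- Let `F` be a number field, `p` a prime and `S` a finite set of nonzero
prime ideals of `O_F`.  Then `|dim_{𝔽_p} Cl(F)[p] − dim_{𝔽_p} Cl_S(F)[p]| ≤ 3|S|`.
The `𝔽_p`-dimensions of the (elementary abelian) `p`-torsion subgroups are encoded by the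
exponents `d₁`, `d₂` with `|Cl(F)[p]| = p^{d₁}` and `|Cl_S(F)[p]| = p^{d₂}`. -/
theorem stmt_14 (F : Type) [Field F] [NumberField F] (p : ℕ) (hp : p.Prime)
    (S : Finset (HeightOneSpectrum (RingOfIntegers F))) (d₁ d₂ : ℕ)
    (h₁ : Nat.card {c : ClassGroup (RingOfIntegers F) // c ^ p = 1} = p ^ d₁)
    (h₂ : Nat.card
        {c : ClassGroup ((S : Set (HeightOneSpectrum (RingOfIntegers F))).integer F) //
          c ^ p = 1} = p ^ d₂) :
    |(d₁ : ℤ) - (d₂ : ℤ)| ≤ 3 * S.card := by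
  obtain ⟨lower, upper⟩ := stmt_14_general hp.one_lt S h₁ h₂
  exact abs_le.2 (by lia)
end
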